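/- Let E = {e_1,…,e_m} (m ≥ 1) be a uniform system of substring equations with e_i : T[p_i..q_i] = T[p'_i..q'_i]. Setting p_{m+1} = p_1, define r = |Σ_{i=1}^{m} (p_{i+1} − p'_i)| and R = Σ_{i=1}^{m} |p_{i+1} − p'_i|. If T satisfies E (i.e., satisfies every e_i), then r is a period of the fragment T[p_1 + R .. q_1 − R], i.e., T(k) = T(k + r) for every integer k with p_1 + R ≤ k ≤ q_1 − R − r. -/

import Mathlib

/-! Follow a position `k` of the first left-hand fragment around the cycle: each equation carries it
from `T[p_i..q_i]` to `T[p'_i..q'_i]`, and re-reading it relative to `p_{i+1}` lowers its offset by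
`p_{i+1} - p'_i`. The accumulated change of offset never exceeds `R`, so every equation applies and
the full cycle gives `T k = T (k - ∑ (p_{i+1} - p'_i))` for `p_1 + R ≤ k ≤ q_1 - R`. Depending on
the sign of the sum, this is used at `k` or at `k + r`. -/

/-- A substring equation `T[p..q] = T[p'..q']`. -/
structure SubEq where
  p : ℤ
  q : ℤ
  p' : ℤ
  q' : ℤ
deriving DecidableEq

/-- The equation is well-formed: both fragments have the same length. -/
def SubEq.valid (e : SubEq) : Prop := e.q - e.p = e.q' - e.p'

/-- The (oriented) shift of the equation. -/
def SubEq.shift (e : SubEq) : ℤ := e.p' - e.p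

/-- The length of the equation. -/
def SubEq.len (e : SubEq) : ℤ := e.q - e.p + 1

/-- The equation is on a text of length `n`. -/
def SubEq.onText (e : SubEq) (n : ℤ) : Prop :=
  1 ≤ e.p ∧ 1 ≤ e.p' ∧ e.q ≤ n ∧ e.q' ≤ n

/-- `T` satisfies the equation `e` with shortage `S`. -/
def SatS {α : Type*} (T : ℤ → α) (e : SubEq) (S : ℤ) : Prop :=
  ∀ k : ℤ, e.p + S ≤ k → k ≤ e.q - S → T k = T (k + e.shift)

/-- Going once around the cycle: the signed form of the period. -/
theorem subEq_cycle_shift {α : Type*} (T : ℤ → α) (m : ℕ) (f : ℕ → SubEq)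
    (hu : ∀ i < m, (f i).len = (f 0).len) (hsat : ∀ i < m, SatS T (f i) 0) (k : ℤ)
    (hk₁ : (f 0).p + ∑ i ∈ Finset.range m, |(f ((i + 1) % m)).p - (f i).p'| ≤ k)
    (hk₂ : k ≤ (f 0).q - ∑ i ∈ Finset.range m, |(f ((i + 1) % m)).p - (f i).p'|) :
    T k = T (k - ∑ i ∈ Finset.range m, ((f ((i + 1) % m)).p - (f i).p')) := by
  have key : ∀ i ≤ m, T k = T ((f (i % m)).p + (k - (f 0).p)
      - ∑ j ∈ Finset.range i, ((f ((j + 1) % m)).p - (f j).p')) := by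
    intro i
    induction i with
    | zero => intro _; simp
    | succ i ih =>
      intro hi
      rw [ih (by omega), Nat.mod_eq_of_lt (show i < m by omega)]
      have hdrift := Finset.abs_sum_le_sum_abs
        (fun j => (f ((j + 1) % m)).p - (f j).p') (Finset.range i)
      have hmono : ∑ j ∈ Finset.range i, |(f ((j + 1) % m)).p - (f j).p'|
          ≤ ∑ j ∈ Finset.range m, |(f ((j + 1) % m)).p - (f j).p'| :=
        Finset.sum_le_sum_of_subset_of_nonneg
          (Finset.range_mono (by omega)) (fun _ _ _ => abs_nonneg _)
      obtain ⟨hlo, hhi⟩ := abs_le.mp (hdrift.trans hmono)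
      have hlen := hu i (by omega)
      simp only [SubEq.len] at hlen
      rw [hsat i (by omega) _ (by linarith) (by linarith), Finset.sum_range_succ]
      congr 1
      simp only [SubEq.shift]
      ring
  rw [key m le_rfl, Nat.mod_self]
  congr 1
  ring

/-- Lemma 12(a): for a uniform cycle of substring equations (indices taken modulo
`m`, so `p_{m+1} = p_1`), if `T` satisfies the system, then
`r = |Σ (p_{i+1} - p'_i)|` is a period of `T[p_1 + R .. q_1 - R]` where
`R = Σ |p_{i+1} - p'_i|`. -/
theorem subEq_cycle_period {α : Type*} (T : ℤ → α) (m : ℕ) (hm : 1 ≤ m)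
    (f : ℕ → SubEq)
    (hv : ∀ i < m, (f i).valid)
    (hu : ∀ i < m, (f i).len = (f 0).len)
    (r R : ℤ)
    (hr : r = |∑ i ∈ Finset.range m, ((f ((i + 1) % m)).p - (f i).p')|)
    (hR : R = ∑ i ∈ Finset.range m, |(f ((i + 1) % m)).p - (f i).p'|)
    (hsat : ∀ i < m, SatS T (f i) 0) :
    ∀ k : ℤ, (f 0).p + R ≤ k → k ≤ (f 0).q - R - r → T k = T (k + r) := by
  intro k hk₁ hk₂
  have hr0 : 0 ≤ r := hr ▸ abs_nonneg _
  rcases abs_cases (∑ i ∈ Finset.range m, ((f ((i + 1) % m)).p - (f i).p')) with ⟨h, _⟩ | ⟨h, _⟩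
  · have := subEq_cycle_shift T m f hu hsat (k + r) (by linarith) (by linarith)
    rw [this]
    congr 1
    linarith
  · rw [subEq_cycle_shift T m f hu hsat k (by linarith) (by linarith)]
    congr 1
    linarith
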